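/- arXiv:alg-geom/9601012 — 2 statements merged into one kernel-verified Lean document; each statement's English description precedes it below -/
import Mathlib

section
/- Let U ⊆ ℂ be open, let F = f + θφ be an even superfunction on U (f : U → Λ₀ and φ : U → Λ₁ holomorphic) and Ψ = ψ + θg an odd superfunction on U (ψ : U → Λ₁ and g : U → Λ₀ holomorphic), and assume g(z) is invertible in Λ for every z ∈ U. Then ∂_θΨ = g and DΨ = g + θψ′ are invertible superfunctions, and the Berezinian of the super-Jacobian matrix satisfies ber [[∂_zF, ∂_zΨ],[∂_θF, ∂_θΨ]] = D(DF·(DΨ)⁻¹); explicitly, (∂_zF − ∂_zΨ·(∂_θΨ)⁻¹·∂_θF)·(∂_θΨ)⁻¹ = D((DF)·(DΨ)⁻¹), where ∂_zF = f′ + θφ′, ∂_θF = φ, ∂_zΨ = ψ′ + θg′, ∂_θΨ = g. -/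
noncomputable section

open ExteriorAlgebra

/-- `Λ n`: the exterior algebra of `ℂⁿ` (with its `n` odd generators `βᵢ`). -/
abbrev SuperAlg (n : ℕ) : Type := ExteriorAlgebra ℂ (Fin n → ℂ)

/-- The even part `Λ₀` of the exterior algebra, i.e. the degree-`0̄` part of its `ℤ₂`-grading. -/
def evenPart (n : ℕ) : Submodule ℂ (SuperAlg n) :=
  CliffordAlgebra.evenOdd (0 : QuadraticForm ℂ (Fin n → ℂ)) 0

/-- The odd part `Λ₁` of the exterior algebra, i.e. the degree-`1̄` part of its `ℤ₂`-grading. -/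
def oddPart (n : ℕ) : Submodule ℂ (SuperAlg n) :=
  CliffordAlgebra.evenOdd (0 : QuadraticForm ℂ (Fin n → ℂ)) 1

set_option synthInstance.maxHeartbeats 1000000 in
theorem superAlg_noZeroSMulDivisors (n : ℕ) : NoZeroSMulDivisors ℂ (SuperAlg n) :=
  inferInstance

theorem superAlg_exteriorPower_eq_bot (n i : ℕ) (hi : n < i) :
    (⋀[ℂ]^i (Fin n → ℂ) : Submodule ℂ (SuperAlg n)) = ⊥ := by
  rw [← ExteriorAlgebra.ιMulti_span_fixedDegree]
  refine le_bot_iff.mp (Submodule.span_le.mpr ?_)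
  rintro x ⟨v, rfl⟩
  have hv : ¬ LinearIndependent ℂ v := by
    intro h
    have hc := h.fintype_card_le_finrank
    simp only [Fintype.card_fin, Module.finrank_fin_fun] at hc
    omega
  haveI := superAlg_noZeroSMulDivisors n
  simpa using AlternatingMap.map_linearDependent (ιMulti ℂ i) v hv

/-- `Λ` is a finite-dimensional complex vector space (of dimension `2ⁿ`). -/
instance superAlg_moduleFinite (n : ℕ) : Module.Finite ℂ (SuperAlg n) := by
  classical
  rw [Module.finite_def]
  have hfg : ∀ i : ℕ, (⋀[ℂ]^i (Fin n → ℂ) : Submodule ℂ (SuperAlg n)).FG := by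
    intro i
    refine Submodule.FG.pow ?_ i
    rw [LinearMap.range_eq_map]
    exact Submodule.FG.map _ (Module.finite_def.mp inferInstance)
  have hint : DirectSum.IsInternal
      (fun i : ℕ => (⋀[ℂ]^i (Fin n → ℂ) : Submodule ℂ (SuperAlg n))) :=
    DirectSum.Decomposition.isInternal _
  have htop := hint.submodule_iSup_eq_top
  have hsup : (⊤ : Submodule ℂ (SuperAlg n))
      = ⨆ i ∈ Finset.range (n + 1), (⋀[ℂ]^i (Fin n → ℂ) : Submodule ℂ (SuperAlg n)) := by
    refine le_antisymm ?_ le_top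
    rw [← htop]
    refine iSup_le fun i => ?_
    rcases le_or_gt i n with hi | hi
    · exact le_biSup _ (Finset.mem_range.mpr (by omega))
    · rw [superAlg_exteriorPower_eq_bot n i hi]
      exact bot_le
  rw [hsup]
  exact Submodule.fg_biSup _ _ fun i _ => hfg i

/-- A norm on the finite-dimensional complex vector space `Λ`, transported from `ℂ^{2ⁿ}` by a
choice of basis.  (All norms on a finite-dimensional complex vector space are equivalent, so
the notions of holomorphy and derivative below do not depend on this choice; holomorphy is
equivalent to componentwise complex analyticity with respect to any basis.) -/
instance superAlg_normedAddCommGroup (n : ℕ) : NormedAddCommGroup (SuperAlg n) :=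
  NormedAddCommGroup.induced (SuperAlg n)
    (Fin (Module.finrank ℂ (SuperAlg n)) → ℂ)
    (Module.finBasis ℂ (SuperAlg n)).equivFun
    (Module.finBasis ℂ (SuperAlg n)).equivFun.injective

instance superAlg_normedSpace (n : ℕ) : NormedSpace ℂ (SuperAlg n) :=
  NormedSpace.induced ℂ (SuperAlg n) (Fin (Module.finrank ℂ (SuperAlg n)) → ℂ)
    (Module.finBasis ℂ (SuperAlg n)).equivFun

/-- The reduction `λ ↦ λ^red`: the image of `λ ∈ Λ` under the augmentation `Λ → ℂ`
(quotienting out nilpotents). -/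
def reduce (n : ℕ) (a : SuperAlg n) : ℂ :=
  ExteriorAlgebra.algebraMapInv (R := ℂ) (M := Fin n → ℂ) a

/-- A superfunction `p + θq` on (an open subset of) `ℂ`, represented by the pair `(p, q)` of
`Λ`-valued functions. -/
abbrev SF1 (n : ℕ) : Type := (ℂ → SuperAlg n) × (ℂ → SuperAlg n)

/-- The parity automorphism `σ` of `Λ` (identity on `Λ₀`, `−1` on `Λ₁`), i.e. the grade
involution of the exterior algebra. -/
def parityAut {n : ℕ} (a : SuperAlg n) : SuperAlg n := CliffordAlgebra.involute a

/-- The product of superfunctions: `(p+θq)·(r+θs) = p·r + θ(q·r + σ(p)·s)`. -/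
def sfMul {n : ℕ} (a b : SF1 n) : SF1 n :=
  (fun z => a.1 z * b.1 z, fun z => a.2 z * b.1 z + parityAut (a.1 z) * b.2 z)

/-- The inverse of a superfunction `p + θq` (meaningful where `p(z)` is invertible in `Λ`):
`(p+θq)⁻¹ = p⁻¹ − θ(σ(p⁻¹)·q·p⁻¹)`. -/
def sfInv {n : ℕ} (a : SF1 n) : SF1 n :=
  (fun z => Ring.inverse (a.1 z),
   fun z => -(parityAut (Ring.inverse (a.1 z)) * a.2 z * Ring.inverse (a.1 z)))

/-- The constant superfunction `1`. -/
def sfOne (n : ℕ) : SF1 n := (fun _ => 1, fun _ => 0)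

/-- The superderivative `D(p+θq) = q + θp′`. -/
def sfD {n : ℕ} (a : SF1 n) : SF1 n := (a.2, fun z => deriv a.1 z)

/-- `∂_z(p+θq) = p′ + θq′`. -/
def sfDz {n : ℕ} (a : SF1 n) : SF1 n := (fun z => deriv a.1 z, fun z => deriv a.2 z)

/-- `∂_θ(p+θq) = q` (as the superfunction `q + θ·0`). -/
def sfDtheta {n : ℕ} (a : SF1 n) : SF1 n := (a.2, fun _ => 0)

/-- Componentwise equality of superfunctions on `U`. -/
def EqOn1 {n : ℕ} (U : Set ℂ) (a b : SF1 n) : Prop :=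
  Set.EqOn a.1 b.1 U ∧ Set.EqOn a.2 b.2 U

open ExteriorAlgebra in
theorem aux_iota (n : ℕ) (v : Fin n → ℂ) (x : SuperAlg n) :
    ExteriorAlgebra.ι ℂ v * x = parityAut x * ExteriorAlgebra.ι ℂ v := by
  unfold parityAut
  induction x using CliffordAlgebra.induction with
  | algebraMap r => rw [AlgHom.commutes]; exact (Algebra.commutes r _).symm
  | ι w =>
    rw [CliffordAlgebra.involute_ι]
    have h := ExteriorAlgebra.ι_add_mul_swap (R := ℂ) v w
    rw [neg_mul]
    exact eq_neg_of_add_eq_zero_left h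
  | mul a b ha hb => rw [map_mul, ← mul_assoc, ha, mul_assoc, hb, mul_assoc]
  | add a b ha hb => rw [map_add, mul_add, add_mul, ha, hb]

theorem parity_even {n : ℕ} {a : SuperAlg n} (ha : a ∈ evenPart n) : parityAut a = a :=
  CliffordAlgebra.involute_eq_of_mem_even ha

theorem parity_odd {n : ℕ} {a : SuperAlg n} (ha : a ∈ oddPart n) : parityAut a = -a :=
  CliffordAlgebra.involute_eq_of_mem_odd ha

theorem even_comm {n : ℕ} {a : SuperAlg n} (ha : a ∈ evenPart n) (x : SuperAlg n) :
    x * a = a * x := by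
  induction x using CliffordAlgebra.induction with
  | algebraMap r => exact Algebra.commutes r _
  | ι w => exact (aux_iota n w a).trans (by rw [parity_even ha])
  | mul b c hb hc => rw [mul_assoc, hc, ← mul_assoc, hb, mul_assoc]
  | add b c hb hc => rw [mul_add, add_mul, hb, hc]

theorem odd_comm {n : ℕ} {a : SuperAlg n} (ha : a ∈ oddPart n) (x : SuperAlg n) :
    x * a = a * parityAut x := by
  unfold parityAut
  induction x using CliffordAlgebra.induction with
  | algebraMap r => rw [AlgHom.commutes]; exact Algebra.commutes r _
  | ι w =>
    rw [CliffordAlgebra.involute_ι]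
    exact (aux_iota n w a).trans (by rw [parity_odd ha, neg_mul, mul_neg])
  | mul b c hb hc => rw [map_mul, mul_assoc, hc, ← mul_assoc, hb, mul_assoc]
  | add b c hb hc => rw [map_add, mul_add, add_mul, hb, hc]

instance superAlg_fd (n : ℕ) : FiniteDimensional ℂ (SuperAlg n) := superAlg_moduleFinite n

/-- Left multiplication as a continuous linear map. -/
def mulCLM (n : ℕ) : SuperAlg n →L[ℂ] (SuperAlg n →L[ℂ] SuperAlg n) :=
  LinearMap.toContinuousLinearMap
    ((LinearMap.toContinuousLinearMap (𝕜 := ℂ) (E := SuperAlg n) (F' := SuperAlg n)).toLinearMap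
      ∘ₗ (LinearMap.mul ℂ (SuperAlg n)))

theorem mulCLM_apply {n : ℕ} (a b : SuperAlg n) : mulCLM n a b = a * b := rfl

theorem hasDerivAt_mul' {n : ℕ} {a b : ℂ → SuperAlg n} {a' b' : SuperAlg n} {z : ℂ}
    (ha : HasDerivAt a a' z) (hb : HasDerivAt b b' z) :
    HasDerivAt (fun w => a w * b w) (a' * b z + a z * b') z := by
  have h1 : HasDerivAt (fun w => mulCLM n (a w)) (mulCLM n a') z :=
    (mulCLM n).hasFDerivAt.comp_hasDerivAt z ha
  exact h1.clm_apply hb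

theorem inverse_mulCLM {n : ℕ} {a : SuperAlg n} (ha : IsUnit a) :
    Ring.inverse (mulCLM n a) 1 = Ring.inverse a ∧ IsUnit (mulCLM n a) := by
  have h1 : mulCLM n a * mulCLM n (Ring.inverse a) = 1 := by
    ext x
    change a * (Ring.inverse a * x) = x
    rw [← mul_assoc, Ring.mul_inverse_cancel _ ha, one_mul]
  have h2 : mulCLM n (Ring.inverse a) * mulCLM n a = 1 := by
    ext x
    change Ring.inverse a * (a * x) = x
    rw [← mul_assoc, Ring.inverse_mul_cancel _ ha, one_mul]
  let u : (SuperAlg n →L[ℂ] SuperAlg n)ˣ := ⟨_, _, h1, h2⟩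
  refine ⟨?_, ⟨u, rfl⟩⟩
  have h3 : Ring.inverse (mulCLM n a) = mulCLM n (Ring.inverse a) := Ring.inverse_unit u
  rw [h3, mulCLM_apply, mul_one]

theorem diff_inverse {n : ℕ} {U : Set ℂ} (hU : IsOpen U) {g : ℂ → SuperAlg n}
    (hg : DifferentiableOn ℂ g U) (hu : ∀ z ∈ U, IsUnit (g z)) {z : ℂ} (hz : z ∈ U) :
    DifferentiableAt ℂ (fun w => Ring.inverse (g w)) z := by
  haveI : CompleteSpace (SuperAlg n) := FiniteDimensional.complete ℂ _
  have h0 : DifferentiableAt ℂ g z := hg.differentiableAt (hU.mem_nhds hz)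
  have h1 : DifferentiableAt ℂ (fun w => mulCLM n (g w)) z :=
    (mulCLM n).differentiableAt.comp z h0
  obtain ⟨u, hu'⟩ := (inverse_mulCLM (hu z hz)).2
  have h2 : DifferentiableAt ℂ (Ring.inverse : (SuperAlg n →L[ℂ] SuperAlg n) → _)
      (mulCLM n (g z)) := by
    rw [← hu']
    exact (hasFDerivAt_ringInverse (𝕜 := ℂ) u).differentiableAt
  have h3 : DifferentiableAt ℂ (fun w => Ring.inverse (mulCLM n (g w)) 1) z :=
    (h2.comp z h1).clm_apply (differentiableAt_const _)
  refine h3.congr_of_eventuallyEq ?_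
  filter_upwards [hU.mem_nhds hz] with w hw
  exact (inverse_mulCLM (hu w hw)).1.symm

theorem deriv_even_comm {n : ℕ} {U : Set ℂ} (hU : IsOpen U) {g : ℂ → SuperAlg n}
    (hg : DifferentiableOn ℂ g U) (he : ∀ z ∈ U, g z ∈ evenPart n) {z : ℂ} (hz : z ∈ U)
    (x : SuperAlg n) : x * deriv g z = deriv g z * x := by
  have h0 := (hg.differentiableAt (hU.mem_nhds hz)).hasDerivAt
  have h1 := hasDerivAt_mul' (hasDerivAt_const z x) h0
  have h2 := hasDerivAt_mul' h0 (hasDerivAt_const z x)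
  have h3 := h1.unique (h2.congr_of_eventuallyEq (by
    filter_upwards [hU.mem_nhds hz] with w hw
    exact even_comm (he w hw) x))
  simpa using h3

theorem deriv_odd_comm {n : ℕ} {U : Set ℂ} (hU : IsOpen U) {g : ℂ → SuperAlg n}
    (hg : DifferentiableOn ℂ g U) (he : ∀ z ∈ U, g z ∈ oddPart n) {z : ℂ} (hz : z ∈ U)
    {x : SuperAlg n} (hx : x ∈ oddPart n) : x * deriv g z = -(deriv g z * x) := by
  have h0 := (hg.differentiableAt (hU.mem_nhds hz)).hasDerivAt
  have h1 := hasDerivAt_mul' (hasDerivAt_const z x) h0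
  have h2 := hasDerivAt_mul' h0 (hasDerivAt_const z (-x))
  have h3 := h1.unique (h2.congr_of_eventuallyEq (by
    filter_upwards [hU.mem_nhds hz] with w hw
    rw [odd_comm (he w hw) x, parity_odd hx]))
  simpa using h3

theorem parity_mul {n : ℕ} (a b : SuperAlg n) : parityAut (a * b) = parityAut a * parityAut b :=
  map_mul _ _ _

theorem parity_one {n : ℕ} : parityAut (1 : SuperAlg n) = 1 := map_one _

/-- Let `U ⊆ ℂ` be open, `F = f + θφ` an even superfunction and
`Ψ = ψ + θg` an odd superfunction on `U`, with `g(z)` invertible in `Λ` for every `z ∈ U`.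
Then `∂_θΨ` and `DΨ` are invertible superfunctions, and the Berezinian of the super-Jacobian
matrix satisfies
`(∂_zF − ∂_zΨ·(∂_θΨ)⁻¹·∂_θF)·(∂_θΨ)⁻¹ = D(DF·(DΨ)⁻¹)` on `U`. -/
theorem statement3 (n : ℕ) (U : Set ℂ) (hU : IsOpen U) (f φ ψ g : ℂ → SuperAlg n)
    (hf : DifferentiableOn ℂ f U) (hφ : DifferentiableOn ℂ φ U)
    (hψ : DifferentiableOn ℂ ψ U) (hg : DifferentiableOn ℂ g U)
    (hfe : ∀ z ∈ U, f z ∈ evenPart n) (hφo : ∀ z ∈ U, φ z ∈ oddPart n)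
    (hψo : ∀ z ∈ U, ψ z ∈ oddPart n) (hge : ∀ z ∈ U, g z ∈ evenPart n)
    (hginv : ∀ z ∈ U, IsUnit (g z)) :
    (EqOn1 U (sfMul (sfDtheta ((ψ, g) : SF1 n)) (sfInv (sfDtheta ((ψ, g) : SF1 n)))) (sfOne n) ∧
     EqOn1 U (sfMul (sfInv (sfDtheta ((ψ, g) : SF1 n))) (sfDtheta ((ψ, g) : SF1 n))) (sfOne n)) ∧
    (EqOn1 U (sfMul (sfD ((ψ, g) : SF1 n)) (sfInv (sfD ((ψ, g) : SF1 n)))) (sfOne n) ∧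
     EqOn1 U (sfMul (sfInv (sfD ((ψ, g) : SF1 n))) (sfD ((ψ, g) : SF1 n))) (sfOne n)) ∧
    EqOn1 U
      (sfMul
        (sfDz ((f, φ) : SF1 n) -
          sfMul (sfMul (sfDz ((ψ, g) : SF1 n)) (sfInv (sfDtheta ((ψ, g) : SF1 n))))
            (sfDtheta ((f, φ) : SF1 n)))
        (sfInv (sfDtheta ((ψ, g) : SF1 n))))
      (sfD (sfMul (sfD ((f, φ) : SF1 n)) (sfInv (sfD ((ψ, g) : SF1 n))))) := by
  have hgh : ∀ z ∈ U, g z * Ring.inverse (g z) = 1 := fun z hz =>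
    Ring.mul_inverse_cancel _ (hginv z hz)
  have hhg : ∀ z ∈ U, Ring.inverse (g z) * g z = 1 := fun z hz =>
    Ring.inverse_mul_cancel _ (hginv z hz)
  have hpar : ∀ z ∈ U, parityAut (g z) * parityAut (Ring.inverse (g z)) = 1 := fun z hz => by
    rw [← parity_mul, hgh z hz, parity_one]
  have hparh : ∀ z ∈ U, parityAut (Ring.inverse (g z)) = Ring.inverse (g z) := fun z hz => by
    have h := hpar z hz
    rw [parity_even (hge z hz)] at h
    calc _ = (Ring.inverse (g z) * g z) * parityAut (Ring.inverse (g z)) := by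
            rw [hhg z hz, one_mul]
      _ = _ := by rw [mul_assoc, h, mul_one]
  have hhc : ∀ z ∈ U, ∀ x, x * Ring.inverse (g z) = Ring.inverse (g z) * x := fun z hz x => by
    calc _ = Ring.inverse (g z) * (g z * x) * Ring.inverse (g z) := by
            rw [← mul_assoc, hhg z hz, one_mul]
      _ = _ := by rw [← even_comm (hge z hz) x, mul_assoc, mul_assoc, hgh z hz, mul_one]
  refine ⟨⟨⟨fun z hz => ?_, fun z hz => ?_⟩, ⟨fun z hz => ?_, fun z hz => ?_⟩⟩,
    ⟨⟨fun z hz => ?_, fun z hz => ?_⟩, ⟨fun z hz => ?_, fun z hz => ?_⟩⟩,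
    ⟨fun z hz => ?_, fun z hz => ?_⟩⟩
  · exact hgh z hz
  · simp [sfMul, sfInv, sfDtheta, sfOne]
  · exact hhg z hz
  · simp [sfMul, sfInv, sfDtheta, sfOne]
  · exact hgh z hz
  · simp only [sfMul, sfInv, sfD, sfOne]
    rw [mul_neg, mul_assoc (parityAut _), ← mul_assoc (parityAut (g z)), hpar z hz, one_mul,
      add_neg_cancel]
  · exact hhg z hz
  · simp only [sfMul, sfInv, sfD, sfOne]
    rw [neg_mul, mul_assoc _ (Ring.inverse (g z)), hhg z hz, mul_one, neg_add_cancel]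
  · change (deriv f z - deriv ψ z * Ring.inverse (g z) * φ z) * Ring.inverse (g z) =
      deriv f z * Ring.inverse (g z) + parityAut (φ z) *
        -(parityAut (Ring.inverse (g z)) * deriv ψ z * Ring.inverse (g z))
    rw [hparh z hz, parity_odd (hφo z hz), neg_mul_neg, sub_mul, sub_eq_add_neg,
      ← hhc z hz (deriv ψ z), ← mul_assoc, ← mul_assoc,
      deriv_odd_comm hU hψ hψo hz (hφo z hz), mul_assoc (deriv ψ z), ← hhc z hz (φ z),
      ← mul_assoc, neg_mul, neg_mul]
  · have dg := (hg.differentiableAt (hU.mem_nhds hz)).hasDerivAt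
    have dφ := (hφ.differentiableAt (hU.mem_nhds hz)).hasDerivAt
    have dh := (diff_inverse hU hg hginv hz).hasDerivAt
    have e1 := (hasDerivAt_mul' dg dh).unique
      ((hasDerivAt_const z (1 : SuperAlg n)).congr_of_eventuallyEq (by
        filter_upwards [hU.mem_nhds hz] with w hw
        exact hgh w hw))
    have e2 : deriv (fun w => φ w * Ring.inverse (g w)) z = _ := (hasDerivAt_mul' dφ dh).deriv
    set h := Ring.inverse (g z) with hh
    have e3 : deriv (fun w => Ring.inverse (g w)) z = -(h * (deriv g z * h)) := by
      calc _ = (h * g z) * deriv (fun w => Ring.inverse (g w)) z := by rw [hhg z hz, one_mul]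
        _ = _ := by rw [mul_assoc, eq_neg_of_add_eq_zero_right e1, mul_neg]
    have e4 : (sfD (sfMul (sfD ((f, φ) : SF1 n)) (sfInv (sfD ((ψ, g) : SF1 n))))).2 z =
      deriv (fun w => φ w * Ring.inverse (g w)) z := rfl
    rw [e4, e2, e3]
    have e5 : φ z * (h * (deriv g z * h)) = deriv g z * h * φ z * h := by
      rw [← mul_assoc, ← mul_assoc, deriv_even_comm hU hg hge hz, hhc z hz (φ z), ← mul_assoc]
    rw [mul_neg, e5]
    simp only [sfMul, sfInv, sfDtheta, sfDz, Prod.fst_sub, Prod.snd_sub, Pi.sub_apply,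
      mul_zero, zero_mul, neg_zero, add_zero]
    rw [sub_mul, sub_eq_add_neg]

end
end

section
/- Let A = [[X, α],[β, Y]] be an even (k|l)-supermatrix over Λ with X invertible, set m := k+l, and let i, j ∈ {k+1,…,m} (both indices odd). Assume the (m−1)×(m−1) matrix A^{ij}, obtained from A by deleting row i and column j, is invertible over Λ. Then A^{ij} is (with the inherited indexing) an even (k|l−1)-supermatrix whose even-even block X is invertible, and the quasideterminant |A|_{ij} := a_{ij} − Σ_{p≠j, q≠i} a_{ip}·((A^{ij})⁻¹)_{pq}·a_{qj} (where the rows of (A^{ij})⁻¹ are indexed by {1,…,m}∖{j} and its columns by {1,…,m}∖{i}) satisfies |A|_{ij}·ber*(A^{ij}) = (−1)^{i+j}·ber*(A). -/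
noncomputable section

open ExteriorAlgebra

/-- The determinant of a square matrix over a (possibly noncommutative) ring, given by the
Leibniz formula, the product over each permutation being taken in the canonical order of the
index set.  For matrices whose entries lie in a central commutative subring (such as `Λ₀ ⊆ Λ`)
this is the usual determinant. -/
def ncdet {R : Type*} [Ring R] {k : ℕ} (M : Matrix (Fin k) (Fin k) R) : R :=
  ∑ σ : Equiv.Perm (Fin k), ((Equiv.Perm.sign σ : ℤˣ) : ℤ) • (List.ofFn fun i => M (σ i) i).prod

/-- The even-even block `X` of a `(k|l)`-block matrix. -/
def Xblk (n k l : ℕ) (A : Matrix (Fin (k + l)) (Fin (k + l)) (SuperAlg n)) :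
    Matrix (Fin k) (Fin k) (SuperAlg n) :=
  fun i j => A (Fin.castAdd l i) (Fin.castAdd l j)

/-- The even-odd block `α` of a `(k|l)`-block matrix. -/
def alphaBlk (n k l : ℕ) (A : Matrix (Fin (k + l)) (Fin (k + l)) (SuperAlg n)) :
    Matrix (Fin k) (Fin l) (SuperAlg n) :=
  fun i j => A (Fin.castAdd l i) (Fin.natAdd k j)

/-- The odd-even block `β` of a `(k|l)`-block matrix. -/
def betaBlk (n k l : ℕ) (A : Matrix (Fin (k + l)) (Fin (k + l)) (SuperAlg n)) :
    Matrix (Fin l) (Fin k) (SuperAlg n) :=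
  fun i j => A (Fin.natAdd k i) (Fin.castAdd l j)

/-- The odd-odd block `Y` of a `(k|l)`-block matrix. -/
def Yblk (n k l : ℕ) (A : Matrix (Fin (k + l)) (Fin (k + l)) (SuperAlg n)) :
    Matrix (Fin l) (Fin l) (SuperAlg n) :=
  fun i j => A (Fin.natAdd k i) (Fin.natAdd k j)

/-- `A` is an even `(k|l)`-supermatrix: the diagonal blocks `X`, `Y` have entries in `Λ₀` and
the off-diagonal blocks `α`, `β` have entries in `Λ₁`. -/
def IsEvenSupermatrix (n k l : ℕ) (A : Matrix (Fin (k + l)) (Fin (k + l)) (SuperAlg n)) : Prop :=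
  (∀ i j, Xblk n k l A i j ∈ evenPart n) ∧ (∀ i j, Yblk n k l A i j ∈ evenPart n) ∧
  (∀ i j, alphaBlk n k l A i j ∈ oddPart n) ∧ (∀ i j, betaBlk n k l A i j ∈ oddPart n)

/-- The Berezinian `ber(A) = det(X − α·Y⁻¹·β)·det(Y)⁻¹` (defined when `Y` is invertible). -/
def ber (n k l : ℕ) (A : Matrix (Fin (k + l)) (Fin (k + l)) (SuperAlg n)) : SuperAlg n :=
  ncdet (Xblk n k l A - alphaBlk n k l A * Ring.inverse (Yblk n k l A) * betaBlk n k l A) *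
    Ring.inverse (ncdet (Yblk n k l A))

/-- The inverse Berezinian `ber*(A) = det(X)⁻¹·det(Y − β·X⁻¹·α)` (defined when `X` is
invertible). -/
def berStar (n k l : ℕ) (A : Matrix (Fin (k + l)) (Fin (k + l)) (SuperAlg n)) : SuperAlg n :=
  Ring.inverse (ncdet (Xblk n k l A)) *
    ncdet (Yblk n k l A - betaBlk n k l A * Ring.inverse (Xblk n k l A) * alphaBlk n k l A)
/-- The canonical (order-preserving) embedding of `Fin N` onto the complement of `i` in
`Fin M`, where `M = N + 1`; `skipIdx h i p` is the `p`-th element of `{0, …, M-1} ∖ {i}`. -/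
def skipIdx {N M : ℕ} (h : N + 1 = M) (i : Fin M) : Fin N → Fin M :=
  fun p => Fin.cast h ((Fin.cast h.symm i).succAbove p)

/-- The matrix `A^{ij}` obtained from the square matrix `A` by deleting row `i` and column `j`,
with rows and columns reindexed by the order-preserving identifications with `Fin N`. -/
def delRC {R : Type*} [Ring R] {N M : ℕ} (h : N + 1 = M) (A : Matrix (Fin M) (Fin M) R)
    (i j : Fin M) : Matrix (Fin N) (Fin N) R :=
  fun p q => A (skipIdx h i p) (skipIdx h j q)

/-- The Gelfand–Retakh quasideterminant
`|A|_{ij} = a_{ij} − Σ_{p≠j, q≠i} a_{ip}·((A^{ij})⁻¹)_{pq}·a_{qj}`, where the rows of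
`(A^{ij})⁻¹` are indexed by the complement of `j` and its columns by the complement of `i`
(both via their order-preserving identifications with `Fin N`). -/
def quasidet {R : Type*} [Ring R] {N M : ℕ} (h : N + 1 = M) (A : Matrix (Fin M) (Fin M) R)
    (i j : Fin M) : R :=
  A i j - ∑ p : Fin N, ∑ q : Fin N,
    A i (skipIdx h j p) * (Ring.inverse (delRC h A i j)) p q * A (skipIdx h i q) j

lemma skipIdx_castAdd {k l : ℕ} (h : (k + l) + 1 = k + (l + 1)) (i : Fin (l + 1)) (p : Fin k) :
    skipIdx h (Fin.natAdd k i) (Fin.castAdd l p) = Fin.castAdd (l + 1) p := by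
  apply Fin.ext
  have := p.2
  simp only [skipIdx, Fin.succAbove, Fin.lt_def]
  split_ifs with h1
  · simp
  · simp at h1; omega

lemma skipIdx_natAdd {k l : ℕ} (h : (k + l) + 1 = k + (l + 1)) (i : Fin (l + 1)) (p : Fin l) :
    skipIdx h (Fin.natAdd k i) (Fin.natAdd k p) = Fin.natAdd k (i.succAbove p) := by
  apply Fin.ext
  simp only [skipIdx, Fin.succAbove, Fin.lt_def]
  split_ifs with h1 h2 h2 <;> simp at h1 h2 ⊢ <;> omega

lemma quasidet_key {R : Type*} [Ring R] {N M : ℕ} (h : N + 1 = M) (A : Matrix (Fin M) (Fin M) R)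
    (i j : Fin M) (hdel : IsUnit (delRC h A i j)) (w : Fin M → R)
    (hw : ∀ p, p ≠ i → ∑ q, A p q * w q = 0) :
    ∑ q, A i q * w q = quasidet h A i j * w j := by
  subst h
  have hs : ∀ (i : Fin (N + 1)) p, skipIdx rfl i p = i.succAbove p := fun i p => rfl
  set D := delRC rfl A i j with hD
  have hinv : Ring.inverse D * D = 1 := Ring.inverse_mul_cancel _ hdel
  have h1 : D.mulVec (fun p => w (j.succAbove p)) = fun q => - (A (i.succAbove q) j * w j) := by
    funext q
    have := hw (i.succAbove q) (Fin.succAbove_ne _ _)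
    rw [Fin.sum_univ_succAbove _ j] at this
    simp only [Matrix.mulVec, dotProduct, hD, delRC, hs]
    exact eq_neg_of_add_eq_zero_right this
  have h2 : (fun p => w (j.succAbove p)) =
      (Ring.inverse D).mulVec (fun q => - (A (i.succAbove q) j * w j)) := by
    rw [← h1, Matrix.mulVec_mulVec, hinv, Matrix.one_mulVec]
  rw [Fin.sum_univ_succAbove _ j]
  have h3 : ∀ p, w (j.succAbove p) =
      - ∑ q, Ring.inverse D p q * (A (i.succAbove q) j * w j) := by
    intro p
    rw [← Finset.sum_neg_distrib]
    have := congrFun h2 p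
    simp only [Matrix.mulVec, dotProduct, mul_neg] at this
    exact this
  simp only [quasidet, hs, sub_mul, Finset.sum_mul, ← hD]
  rw [sub_eq_add_neg, ← Finset.sum_neg_distrib]
  congr 1
  refine Finset.sum_congr rfl fun p _ => ?_
  rw [h3, mul_neg, Finset.mul_sum]
  simp only [mul_assoc]

lemma ncdet_center {R : Type*} [Ring R] {k : ℕ} (M : Matrix (Fin k) (Fin k) (Subring.center R)) :
    ncdet (fun p q => (M p q : R)) = (M.det : R) := by
  rw [Matrix.det_apply]
  simp only [ncdet]
  rw [← Subring.subtype_apply, map_sum]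
  refine Finset.sum_congr rfl fun σ _ => ?_
  rw [← List.prod_ofFn, Units.smul_def, map_zsmul, map_list_prod, List.map_ofFn]
  rfl

lemma inverse_center {R : Type*} [Ring R] {k : ℕ} (M : Matrix (Fin k) (Fin k) R)
    (hM : ∀ p q, M p q ∈ Subring.center R) (hu : IsUnit M) (p q : Fin k) :
    Ring.inverse M p q ∈ Subring.center R := by
  rw [Subring.mem_center_iff]
  intro r
  have hc : Commute (Matrix.diagonal fun _ : Fin k => r) M := by
    ext a b
    simp only [Matrix.diagonal_mul, Matrix.mul_diagonal]
    exact Subring.mem_center_iff.1 (hM a b) r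
  have h1 : Ring.inverse M * M = 1 := Ring.inverse_mul_cancel _ hu
  have h2 : M * Ring.inverse M = 1 := Ring.mul_inverse_cancel _ hu
  have h3 : (Matrix.diagonal fun _ : Fin k => r) * Ring.inverse M =
      Ring.inverse M * (Matrix.diagonal fun _ : Fin k => r) := by
    calc _ = Ring.inverse M * M * (Matrix.diagonal fun _ : Fin k => r) * Ring.inverse M := by
          rw [h1, one_mul]
      _ = Ring.inverse M * ((Matrix.diagonal fun _ : Fin k => r) * M) * Ring.inverse M := by
          rw [hc.eq, mul_assoc (Ring.inverse M) M]
      _ = _ := by rw [mul_assoc, mul_assoc, h2, mul_one]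
  have := congrFun (congrFun h3 p) q
  simpa using this

lemma evenPart_center {n : ℕ} {x : SuperAlg n} (hx : x ∈ evenPart n) :
    x ∈ Subring.center (SuperAlg n) := by
  have key : ∀ v : Fin n → ℂ, Commute (ExteriorAlgebra.ι ℂ v) x := by
    intro v
    have anti : ∀ a b : Fin n → ℂ, ExteriorAlgebra.ι ℂ a * ExteriorAlgebra.ι ℂ b =
        - (ExteriorAlgebra.ι ℂ b * ExteriorAlgebra.ι ℂ a) := fun a b =>
      eq_neg_of_add_eq_zero_left (ExteriorAlgebra.ι_add_mul_swap a b)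
    refine CliffordAlgebra.even_induction (0 : QuadraticForm ℂ (Fin n → ℂ))
      (motive := fun x _ => Commute (ExteriorAlgebra.ι ℂ v) x) ?_ ?_ ?_ x hx
    · intro r
      exact (Algebra.commutes r _).symm
    · intro x y _ _ h1 h2
      exact h1.add_right h2
    · intro a b x _ h1
      refine Commute.mul_right ?_ h1
      change ExteriorAlgebra.ι ℂ v * (ExteriorAlgebra.ι ℂ a * ExteriorAlgebra.ι ℂ b) =
        (ExteriorAlgebra.ι ℂ a * ExteriorAlgebra.ι ℂ b) * ExteriorAlgebra.ι ℂ v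
      rw [← mul_assoc, anti v a, neg_mul, mul_assoc, anti v b, mul_neg, neg_neg, mul_assoc]
  rw [Subring.mem_center_iff]
  intro y
  change Commute y x
  induction y using ExteriorAlgebra.induction with
  | algebraMap r => exact Algebra.commutes r _
  | ι v => exact key v
  | mul a b ha hb => exact ha.mul_left hb
  | add a b ha hb => exact ha.add_left hb

lemma odd_mul_odd {n : ℕ} {x y : SuperAlg n} (hx : x ∈ oddPart n) (hy : y ∈ oddPart n) :
    x * y ∈ evenPart n := by
  have := CliffordAlgebra.evenOdd_mul_le (0 : QuadraticForm ℂ (Fin n → ℂ)) 1 1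
    (Submodule.mul_mem_mul hx hy)
  exact this

def schur (n k l : ℕ) (A : Matrix (Fin (k + l)) (Fin (k + l)) (SuperAlg n)) :
    Matrix (Fin l) (Fin l) (SuperAlg n) :=
  Yblk n k l A - betaBlk n k l A * Ring.inverse (Xblk n k l A) * alphaBlk n k l A

lemma schur_center (n k l : ℕ) (A : Matrix (Fin (k + l)) (Fin (k + l)) (SuperAlg n))
    (hA : IsEvenSupermatrix n k l A) (hX : IsUnit (Xblk n k l A)) (p q : Fin l) :
    schur n k l A p q ∈ Subring.center (SuperAlg n) := by
  obtain ⟨h1, h2, h3, h4⟩ := hA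
  refine Subring.sub_mem _ (evenPart_center (h2 p q)) ?_
  rw [Matrix.mul_apply]
  refine Subring.sum_mem _ fun a _ => ?_
  rw [Matrix.mul_apply, Finset.sum_mul]
  refine Subring.sum_mem _ fun b _ => ?_
  have hc := inverse_center _ (fun p q => evenPart_center (h1 p q)) hX b a
  rw [Subring.mem_center_iff.1 hc, mul_assoc]
  exact Subring.mul_mem _ hc (evenPart_center (odd_mul_odd (h4 _ _) (h3 _ _)))

/-- Let `A` be an even `(k|l+1)`-supermatrix over `Λ` with invertible
even-even block `X`, and let `i`, `j` be odd indices.  If the matrix `A^{ij}` obtained by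
deleting row `i` and column `j` is invertible over `Λ`, then `A^{ij}` is (with the inherited
indexing) an even `(k|l)`-supermatrix whose even-even block is invertible, and the
quasideterminant `|A|_{ij}` satisfies `|A|_{ij}·ber*(A^{ij}) = (−1)^{i+j}·ber*(A)`. -/
theorem statement5 (n k l : ℕ) (h : (k + l) + 1 = k + (l + 1))
    (A : Matrix (Fin (k + (l + 1))) (Fin (k + (l + 1))) (SuperAlg n))
    (hA : IsEvenSupermatrix n k (l + 1) A) (hX : IsUnit (Xblk n k (l + 1) A))
    (i j : Fin (k + (l + 1))) (hi : k ≤ (i : ℕ)) (hj : k ≤ (j : ℕ))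
    (hdel : IsUnit (delRC h A i j)) :
    IsEvenSupermatrix n k l (delRC h A i j) ∧
    IsUnit (Xblk n k l (delRC h A i j)) ∧
    quasidet h A i j * berStar n k l (delRC h A i j) =
      ((-1 : ℤ) ^ ((i : ℕ) + (j : ℕ))) • berStar n k (l + 1) A := by
  obtain ⟨i, rfl⟩ : ∃ i' : Fin (l + 1), i = Fin.natAdd k i' :=
    ⟨⟨i - k, by omega⟩, Fin.ext (by simp; omega)⟩
  obtain ⟨j, rfl⟩ : ∃ j' : Fin (l + 1), j = Fin.natAdd k j' :=
    ⟨⟨j - k, by omega⟩, Fin.ext (by simp; omega)⟩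
  set D := delRC h A (Fin.natAdd k i) (Fin.natAdd k j) with hD
  have eX : Xblk n k l D = Xblk n k (l + 1) A := by
    ext p q
    simp only [Xblk, hD, delRC, skipIdx_castAdd]
  have eY : Yblk n k l D = (Yblk n k (l + 1) A).submatrix i.succAbove j.succAbove := by
    ext p q
    simp only [Yblk, hD, delRC, skipIdx_natAdd, Matrix.submatrix_apply]
  have eα : alphaBlk n k l D = (alphaBlk n k (l + 1) A).submatrix id j.succAbove := by
    ext p q
    simp only [alphaBlk, hD, delRC, skipIdx_natAdd, skipIdx_castAdd, Matrix.submatrix_apply, id]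
  have eβ : betaBlk n k l D = (betaBlk n k (l + 1) A).submatrix i.succAbove id := by
    ext p q
    simp only [betaBlk, hD, delRC, skipIdx_natAdd, skipIdx_castAdd, Matrix.submatrix_apply, id]
  have eS : schur n k l D = (schur n k (l + 1) A).submatrix i.succAbove j.succAbove := by
    ext p q
    simp only [schur, eX, eY, eα, eβ, Matrix.sub_apply, Matrix.mul_apply, Matrix.submatrix_apply,
      id]
  have hXc : ∀ p q, Xblk n k (l + 1) A p q ∈ Subring.center (SuperAlg n) :=
    fun p q => evenPart_center (hA.1 p q)
  have hSc := schur_center n k (l + 1) A hA hX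
  refine ⟨⟨?_, ?_, ?_, ?_⟩, eX ▸ hX, ?_⟩
  · rw [eX]; exact hA.1
  · rw [eY]; exact fun p q => hA.2.1 _ _
  · rw [eα]; exact fun p q => hA.2.2.1 _ _
  · rw [eβ]; exact fun p q => hA.2.2.2 _ _
  let S : Matrix (Fin (l + 1)) (Fin (l + 1)) (Subring.center (SuperAlg n)) :=
    fun p q => ⟨schur n k (l + 1) A p q, hSc p q⟩
  have dS : ncdet (schur n k (l + 1) A) = (S.det : SuperAlg n) := ncdet_center S
  have dS' : ncdet (schur n k l D) =
      ((S.submatrix i.succAbove j.succAbove).det : SuperAlg n) := by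
    rw [eS]; exact ncdet_center (S.submatrix i.succAbove j.succAbove)
  -- the test vector
  let w' : Fin (l + 1) → SuperAlg n := fun q => (S.adjugate q i : SuperAlg n)
  let t : Fin k → SuperAlg n :=
    - (Ring.inverse (Xblk n k (l + 1) A)).mulVec ((alphaBlk n k (l + 1) A).mulVec w')
  let w : Fin (k + (l + 1)) → SuperAlg n := Fin.addCases t w'
  have hw : ∀ p, ∑ q, A p q * w q = ∑ q, A p (Fin.castAdd (l + 1) q) * t q +
      ∑ q, A p (Fin.natAdd k q) * w' q := by
    intro p
    rw [Fin.sum_univ_add]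
    simp [w]
  have hw1 : ∀ p : Fin k, ∑ q, A (Fin.castAdd (l + 1) p) q * w q = 0 := by
    intro p
    rw [hw]
    change (Xblk n k (l + 1) A).mulVec t p + (alphaBlk n k (l + 1) A).mulVec w' p = 0
    simp only [t]
    rw [Matrix.mulVec_neg, Matrix.mulVec_mulVec, Ring.mul_inverse_cancel _ hX, Matrix.one_mulVec]
    simp
  have hw2 : ∀ p : Fin (l + 1), ∑ q, A (Fin.natAdd k p) q * w q =
      (schur n k (l + 1) A).mulVec w' p := by
    intro p
    rw [hw]
    change (betaBlk n k (l + 1) A).mulVec t p + (Yblk n k (l + 1) A).mulVec w' p = _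
    simp only [t, schur]
    rw [Matrix.mulVec_neg, Matrix.mulVec_mulVec, Matrix.mulVec_mulVec, Matrix.sub_mulVec]
    simp only [Pi.neg_apply, Pi.sub_apply]
    abel
  have hw3 : ∀ p : Fin (l + 1), (schur n k (l + 1) A).mulVec w' p =
      if p = i then (S.det : SuperAlg n) else 0 := by
    intro p
    have := congrArg (Subring.center (SuperAlg n)).subtype
      (congrFun (congrFun (Matrix.mul_adjugate S) p) i)
    rw [Matrix.mul_apply, map_sum] at this
    simp only [map_mul, Matrix.smul_apply, Matrix.one_apply] at this
    refine Eq.trans this ?_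
    split_ifs <;> simp
  have hq := quasidet_key h A (Fin.natAdd k i) (Fin.natAdd k j) hdel w (by
    intro p
    refine Fin.addCases (fun p _ => hw1 p) (fun p hp => ?_) p
    rw [hw2, hw3, if_neg]
    rintro rfl
    exact hp rfl)
  rw [hw2, hw3, if_pos rfl] at hq
  have hwj : w (Fin.natAdd k j) = ((-1 : ℤ) ^ ((i : ℕ) + (j : ℕ))) •
      ((S.submatrix i.succAbove j.succAbove).det : SuperAlg n) := by
    have : w (Fin.natAdd k j) = (S.adjugate j i : SuperAlg n) := by simp [w, w']
    rw [this, Matrix.adjugate_fin_succ_eq_det_submatrix]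
    simp
  rw [hwj] at hq
  have b1 : berStar n k l D = Ring.inverse (ncdet (Xblk n k (l + 1) A)) *
      ((S.submatrix i.succAbove j.succAbove).det : SuperAlg n) := by
    rw [← dS', ← eX]; rfl
  have b2 : berStar n k (l + 1) A = Ring.inverse (ncdet (Xblk n k (l + 1) A)) *
      (S.det : SuperAlg n) := by
    rw [← dS]; rfl
  have hcomm : Commute (quasidet h A (Fin.natAdd k i) (Fin.natAdd k j))
      (Ring.inverse (ncdet (Xblk n k (l + 1) A))) := by
    have e : ncdet (Xblk n k (l + 1) A) = _ :=
      ncdet_center (fun p q => (⟨Xblk n k (l + 1) A p q, hXc p q⟩ :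
        Subring.center (SuperAlg n)))
    have hc : Commute (quasidet h A (Fin.natAdd k i) (Fin.natAdd k j))
        (ncdet (Xblk n k (l + 1) A)) := by
      rw [e]
      exact Subring.mem_center_iff.1 (Subtype.prop _) _
    by_cases hu : IsUnit (ncdet (Xblk n k (l + 1) A))
    · obtain ⟨u, hu⟩ := hu
      rw [← hu] at hc ⊢
      rw [Ring.inverse_unit]
      exact hc.units_inv_right
    · rw [Ring.inverse_non_unit _ hu]
      exact Commute.zero_right _
  rw [b1, b2, hq, ← mul_assoc, hcomm.eq, mul_assoc, ← mul_smul_comm, ← mul_smul_comm, smul_smul,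
    ← pow_add]
  congr 2
  rw [Even.neg_one_pow]
  · simp
  · simp only [Fin.val_natAdd]
    exact ⟨k + i + j, by ring⟩

end
end
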